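/- (Self-similar profiles give solutions of cNS) Let d ≥ 1, T > 0, and suppose P ∈ C¹((0,∞)) and U, Θ ∈ C²((0,∞)) solve the backward self-similar ODE system. Define, for 0 < t < T and x ∈ ℝ^d ∖ {0} with r = |x|: ρ(t,x) = P(r/√(T−t)), u(t,x) = (T−t)^{−1/2} U(r/√(T−t)) x/r, θ(t,x) = (T−t)^{−1} Θ(r/√(T−t)). Then (ρ, u, θ) satisfies the system (cNS) pointwise on (0,T)×(ℝ^d ∖ {0}). -/

import Mathlib

open Real Set Filter MeasureTheory

/-- Partial derivative in the `i`-th coordinate direction of a scalar field on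
`ℝ^d`. -/
noncomputable def pd {d : ℕ} (i : Fin d) (g : EuclideanSpace ℝ (Fin d) → ℝ)
    (x : EuclideanSpace ℝ (Fin d)) : ℝ :=
  fderiv ℝ g x (EuclideanSpace.single i 1)

/-- The compressible Navier-Stokes equations (cNS) at a point `(t, x)`, for the
density `ρ`, velocity `u`, and temperature `θ`:
continuity, momentum (componentwise), and energy equations. -/
def CNSEqns (d : ℕ) (R CV κ μ lam : ℝ)
    (ρ : ℝ → EuclideanSpace ℝ (Fin d) → ℝ)
    (u : ℝ → EuclideanSpace ℝ (Fin d) → EuclideanSpace ℝ (Fin d))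
    (θ : ℝ → EuclideanSpace ℝ (Fin d) → ℝ)
    (t : ℝ) (x : EuclideanSpace ℝ (Fin d)) : Prop :=
  -- continuity equation
  (deriv (fun s => ρ s x) t + ∑ i, pd i (fun y => ρ t y * u t y i) x = 0)
  -- momentum equation, componentwise
  ∧ (∀ j : Fin d,
      deriv (fun s => ρ s x * u s x j) t
        + ∑ i, pd i (fun y => ρ t y * u t y i * u t y j) x
        + pd j (fun y => R * ρ t y * θ t y) x
      = (lam + μ) * pd j (fun y => ∑ i, pd i (fun z => u t z i) y) x
        + μ * ∑ i, pd i (fun y => pd i (fun z => u t z j) y) x)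
  -- energy equation
  ∧ (deriv (fun s => ρ s x * (‖u s x‖ ^ 2 / 2 + CV * θ s x)) t
      + ∑ i, pd i (fun y =>
          u t y i * (ρ t y * (‖u t y‖ ^ 2 / 2 + CV * θ t y) + R * ρ t y * θ t y)) x
      - κ * ∑ i, pd i (fun y => pd i (fun z => θ t z) y) x
      = ∑ i, pd i (fun y =>
          lam * (∑ k, pd k (fun z => u t z k) y) * u t y i
          + 2 * μ * ∑ j, ((pd i (fun z => u t z j) y
              + pd j (fun z => u t z i) y) / 2) * u t y j) x)

/-- The backward self-similar ODE system for the compressible Navier-Stokes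
equations, for scalar profiles `P, U, Θ : ℝ → ℝ` considered on `(0, ∞)`. -/
def BackwardODE (d : ℕ) (R CV κ μ lam : ℝ) (P U Θ : ℝ → ℝ) : Prop :=
  ∀ r : ℝ, 0 < r →
    ((1/2) * r * deriv P r + deriv P r * U r
        + P r * (deriv U r + ((d : ℝ) - 1) / r * U r) = 0)
    ∧ ((1/2) * (P r * U r)
        + (1/2) * r * deriv (fun s => P s * U s) r
        + deriv (fun s => P s * U s ^ 2) r
        + ((d : ℝ) - 1) / r * (P r * U r ^ 2)
        + R * deriv (fun s => P s * Θ s) r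
        = (2 * μ + lam) *
            (deriv (deriv U) r + ((d : ℝ) - 1) / r * deriv U r
              - ((d : ℝ) - 1) / r ^ 2 * U r))
    ∧ (P r * (U r ^ 2 / 2 + CV * Θ r)
        + (1/2) * r * deriv (fun s => P s * (U s ^ 2 / 2 + CV * Θ s)) r
        + deriv (fun s => U s * P s * (U s ^ 2 / 2 + CV * Θ s)
            + R * U s * P s * Θ s) r
        + ((d : ℝ) - 1) / r *
            (U r * P r * (U r ^ 2 / 2 + CV * Θ r) + R * U r * P r * Θ r)
        - κ * (deriv (deriv Θ) r + ((d : ℝ) - 1) / r * deriv Θ r)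
        = 2 * μ * ((deriv U r) ^ 2 + ((d : ℝ) - 1) / r ^ 2 * U r ^ 2)
          + lam * (deriv U r + ((d : ℝ) - 1) / r * U r) ^ 2
          + (2 * μ + lam) *
              (deriv (deriv U) r + ((d : ℝ) - 1) / r * deriv U r
                - ((d : ℝ) - 1) / r ^ 2 * U r) * U r)

/-!
A radial vector field is curl free, so its Laplacian is the gradient of its divergence and
`D(u) u = ∇(|u|² / 2)`. Hence, away from the origin, (cNS) for a spherically symmetric flow is a
system in time and radius in which only `∂ₜ`, `∂ᵣ` and `v ↦ v' + (d - 1) v / r` appear. When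
density, velocity and temperature are self-similar of weights `0`, `1` and `2` in `(T - t)^(-1/2)`,
all terms of the mass, momentum and energy equations have weights `2`, `3` and `4`, respectively;
dividing by this common power leaves the profile ODEs in divergence form.
-/

open scoped Topology

section PartialDerivatives

variable {d : ℕ} {f g : EuclideanSpace ℝ (Fin d) → ℝ} {x : EuclideanSpace ℝ (Fin d)}

lemma pd_congr (i : Fin d) (h : f =ᶠ[𝓝 x] g) : pd i f x = pd i g x := by
  rw [pd, pd, h.fderiv_eq]

lemma pd_coord (i j : Fin d) (x : EuclideanSpace ℝ (Fin d)) :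
    pd i (fun y => y j) x = if i = j then 1 else 0 := by
  have h : HasFDerivAt (fun y : EuclideanSpace ℝ (Fin d) => y j)
      (EuclideanSpace.proj j : EuclideanSpace ℝ (Fin d) →L[ℝ] ℝ) x :=
    (EuclideanSpace.proj j : EuclideanSpace ℝ (Fin d) →L[ℝ] ℝ).hasFDerivAt
  rw [pd, h.fderiv]
  simp [eq_comm]

lemma pd_mul (i : Fin d) (hf : DifferentiableAt ℝ f x) (hg : DifferentiableAt ℝ g x) :
    pd i (fun y => f y * g y) x = pd i f x * g x + f x * pd i g x := by
  rw [pd, fderiv_fun_mul hf hg]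
  simp only [pd, add_apply, smul_apply, smul_eq_mul]
  ring

lemma pd_sum {ι : Type*} {s : Finset ι} {F : ι → EuclideanSpace ℝ (Fin d) → ℝ} (j : Fin d)
    (hF : ∀ i ∈ s, DifferentiableAt ℝ (F i) x) :
    pd j (fun y => ∑ i ∈ s, F i y) x = ∑ i ∈ s, pd j (F i) x := by
  simp only [pd, fderiv_fun_sum hF, sum_apply]

lemma differentiableAt_fderiv_of_contDiffAt (hf : ContDiffAt ℝ 2 f x) :
    DifferentiableAt ℝ (fderiv ℝ f) x :=
  (hf.fderiv_right (m := 1) (by norm_num)).differentiableAt one_ne_zero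

lemma differentiableAt_pd (i : Fin d) (hf : ContDiffAt ℝ 2 f x) :
    DifferentiableAt ℝ (pd i f) x :=
  (differentiableAt_fderiv_of_contDiffAt hf).clm_apply (differentiableAt_const _)

lemma pd_pd_comm (i j : Fin d) (hf : ContDiffAt ℝ 2 f x) :
    pd i (pd j f) x = pd j (pd i f) x := by
  have pd_pd (k l : Fin d) : pd k (pd l f) x =
      fderiv ℝ (fderiv ℝ f) x (EuclideanSpace.single k 1) (EuclideanSpace.single l 1) := by
    change fderiv ℝ (fun y => fderiv ℝ f y (EuclideanSpace.single l 1)) x _ = _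
    rw [fderiv_clm_apply (differentiableAt_fderiv_of_contDiffAt hf) (differentiableAt_const _)]
    simp
  have hsymm : IsSymmSndFDerivAt ℝ f x := hf.isSymmSndFDerivAt (by simp)
  rw [pd_pd, pd_pd, hsymm.eq]

lemma pd_comp_norm {φ : ℝ → ℝ} (i : Fin d) (hx : x ≠ 0) (hφ : DifferentiableAt ℝ φ ‖x‖) :
    pd i (fun y => φ ‖y‖) x = deriv φ ‖x‖ / ‖x‖ * x i := by
  have hnorm : HasFDerivAt (fun y : EuclideanSpace ℝ (Fin d) => ‖y‖)
      ((1 / (2 * ‖x‖)) • (2 • innerSL ℝ x)) x := by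
    simpa [Real.sqrt_sq] using
      (hasStrictFDerivAt_norm_sq x).hasFDerivAt.sqrt (by simpa using hx)
  have hcomp : HasFDerivAt (fun y : EuclideanSpace ℝ (Fin d) => φ ‖y‖) _ x :=
    hφ.hasDerivAt.comp_hasFDerivAt x hnorm
  rw [pd, hcomp.fderiv]
  simp only [smul_apply, coe_innerSL_apply, EuclideanSpace.inner_single_right, ringHom_apply,
    one_mul, nsmul_eq_mul, Nat.cast_ofNat, smul_eq_mul]
  field_simp

end PartialDerivatives

/-- The radial vector field `v(|y|) y / |y|` with radial component `v`; it vanishes at the origin,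
where the division gives `0`. -/
noncomputable def radialField {d : ℕ} (v : ℝ → ℝ) (y : EuclideanSpace ℝ (Fin d)) :
    EuclideanSpace ℝ (Fin d) :=
  (v ‖y‖ / ‖y‖) • y

/-- The divergence `v' + (d - 1) v / r` of the radial vector field with radial component `v`, as a
function of the radius. -/
noncomputable def radialDiv (d : ℕ) (v : ℝ → ℝ) (r : ℝ) : ℝ :=
  deriv v r + ((d : ℝ) - 1) / r * v r

section RadialFields

variable {d : ℕ} {v w : ℝ → ℝ} {x : EuclideanSpace ℝ (Fin d)}

lemma radialField_apply (v : ℝ → ℝ) (y : EuclideanSpace ℝ (Fin d)) (i : Fin d) :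
    radialField v y i = v ‖y‖ / ‖y‖ * y i := rfl

lemma mul_radialField_apply (f v : ℝ → ℝ) (y : EuclideanSpace ℝ (Fin d)) (i : Fin d) :
    f ‖y‖ * radialField v y i = radialField (fun r => f r * v r) y i := by
  simp only [radialField_apply]
  ring

lemma norm_radialField_sq (v : ℝ → ℝ) (hx : x ≠ 0) : ‖radialField v x‖ ^ 2 = v ‖x‖ ^ 2 := by
  rw [radialField, norm_smul, mul_pow, Real.norm_eq_abs, sq_abs, div_pow,
    div_mul_cancel₀ _ (pow_ne_zero 2 (norm_ne_zero_iff.2 hx))]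

lemma differentiableAt_comp_norm {φ : ℝ → ℝ} (hx : x ≠ 0) (hφ : DifferentiableAt ℝ φ ‖x‖) :
    DifferentiableAt ℝ (fun y => φ ‖y‖) x :=
  hφ.comp x (differentiableAt_id.norm ℝ hx)

lemma differentiableAt_radialField_apply (i : Fin d) (hx : x ≠ 0)
    (hv : DifferentiableAt ℝ v ‖x‖) : DifferentiableAt ℝ (fun y => radialField v y i) x :=
  (differentiableAt_comp_norm hx
    (hv.fun_div differentiableAt_id (norm_ne_zero_iff.2 hx))).fun_mul (by fun_prop)

lemma contDiffAt_radialField_apply {n : ℕ∞} (i : Fin d) (hx : x ≠ 0)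
    (hv : ContDiffAt ℝ n v ‖x‖) : ContDiffAt ℝ n (fun y => radialField v y i) x := by
  have hnorm : ContDiffAt ℝ n (fun y : EuclideanSpace ℝ (Fin d) => ‖y‖) x := contDiffAt_norm ℝ hx
  exact ((hv.comp x hnorm).div hnorm (norm_ne_zero_iff.2 hx)).mul (by fun_prop)

lemma pd_radialField_apply (i j : Fin d) (hx : x ≠ 0) (hv : DifferentiableAt ℝ v ‖x‖) :
    pd i (fun y => radialField v y j) x
      = (deriv v ‖x‖ / ‖x‖ ^ 2 - v ‖x‖ / ‖x‖ ^ 3) * (x i * x j)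
        + v ‖x‖ / ‖x‖ * (if i = j then 1 else 0) := by
  have hr : ‖x‖ ≠ 0 := norm_ne_zero_iff.2 hx
  have hslope : DifferentiableAt ℝ (fun r => v r / r) ‖x‖ := hv.div differentiableAt_id hr
  have hderiv : deriv (fun r => v r / r) ‖x‖ = (deriv v ‖x‖ * ‖x‖ - v ‖x‖) / ‖x‖ ^ 2 := by
    simpa using deriv_fun_div hv differentiableAt_id hr
  simp only [radialField_apply]
  rw [pd_mul i (differentiableAt_comp_norm hx hslope) (by fun_prop),
    pd_comp_norm i hx hslope, pd_coord, hderiv]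
  field_simp

lemma pd_radialField_comm (i j : Fin d) (hx : x ≠ 0) (hv : DifferentiableAt ℝ v ‖x‖) :
    pd i (fun y => radialField v y j) x = pd j (fun y => radialField v y i) x := by
  simp only [pd_radialField_apply _ _ hx hv, mul_comm (x i), eq_comm (a := i)]

lemma sum_pd_radialField (hx : x ≠ 0) (hv : DifferentiableAt ℝ v ‖x‖) :
    ∑ i, pd i (fun y => radialField v y i) x = radialDiv d v ‖x‖ := by
  have hr : ‖x‖ ≠ 0 := norm_ne_zero_iff.2 hx
  simp only [pd_radialField_apply _ _ hx hv, ← sq, Finset.sum_add_distrib, ← Finset.mul_sum,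
    ← EuclideanSpace.real_norm_sq_eq, if_true, Finset.sum_const, Finset.card_univ,
    Fintype.card_fin, nsmul_eq_mul, radialDiv]
  field_simp
  ring

lemma sum_pd_radialField_mul_radialField (i : Fin d) (hx : x ≠ 0)
    (hv : DifferentiableAt ℝ v ‖x‖) (w : ℝ → ℝ) :
    ∑ j, pd i (fun y => radialField v y j) x * radialField w x j
      = radialField (fun r => deriv v r * w r) x i := by
  have hr : ‖x‖ ≠ 0 := norm_ne_zero_iff.2 hx
  have hterm (j : Fin d) : pd i (fun y => radialField v y j) x * radialField w x j
      = (deriv v ‖x‖ / ‖x‖ ^ 2 - v ‖x‖ / ‖x‖ ^ 3) * (w ‖x‖ / ‖x‖) * x i * x j ^ 2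
        + if i = j then v ‖x‖ / ‖x‖ * (w ‖x‖ / ‖x‖) * x j else 0 := by
    rw [pd_radialField_apply i j hx hv, radialField_apply]
    split_ifs <;> ring
  rw [Finset.sum_congr rfl fun j _ => hterm j]
  simp only [Finset.sum_add_distrib, ← Finset.mul_sum, ← EuclideanSpace.real_norm_sq_eq,
    Finset.sum_ite_eq, Finset.mem_univ, if_true, radialField_apply]
  field_simp
  ring

lemma sum_pd_mul_radialField (j : Fin d) (hx : x ≠ 0)
    (hv : DifferentiableAt ℝ v ‖x‖) (hw : DifferentiableAt ℝ w ‖x‖) :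
    ∑ i, pd i (fun y => radialField v y i * radialField w y j) x
      = radialField (radialDiv d fun r => v r * w r) x j := by
  calc ∑ i, pd i (fun y => radialField v y i * radialField w y j) x
      = (∑ i, pd i (fun y => radialField v y i) x) * radialField w x j
        + ∑ i, pd j (fun y => radialField w y i) x * radialField v x i := by
        rw [Finset.sum_mul, ← Finset.sum_add_distrib]
        refine Finset.sum_congr rfl fun i _ => ?_
        rw [pd_mul i (differentiableAt_radialField_apply i hx hv)
          (differentiableAt_radialField_apply j hx hw), pd_radialField_comm i j hx hw,
          mul_comm (radialField v x i)]
    _ = radialField (radialDiv d fun r => v r * w r) x j := by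
        rw [sum_pd_radialField hx hv, sum_pd_radialField_mul_radialField j hx hw]
        simp only [radialField_apply, radialDiv, deriv_fun_mul hv hw]
        ring

lemma eventually_differentiableAt_norm (hv : ContDiffAt ℝ 2 v ‖x‖) :
    ∀ᶠ y in 𝓝 x, DifferentiableAt ℝ v ‖y‖ :=
  continuous_norm.continuousAt.eventually <|
    (hv.eventually (by simp)).mono fun _ h => h.differentiableAt two_ne_zero

lemma differentiableAt_deriv_of_contDiffAt {r : ℝ} (hv : ContDiffAt ℝ 2 v r) :
    DifferentiableAt ℝ (deriv v) r :=
  (hv.derivWithin (m := 1) (by norm_num)).differentiableAt one_ne_zero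

lemma hasDerivAt_radialDiv {r : ℝ} (hr : r ≠ 0) (hv : ContDiffAt ℝ 2 v r) :
    HasDerivAt (radialDiv d v) (deriv (deriv v) r + ((d : ℝ) - 1) / r * deriv v r
      - ((d : ℝ) - 1) / r ^ 2 * v r) r := by
  have hv₁ := (hv.differentiableAt two_ne_zero).hasDerivAt
  have hv₂ := (differentiableAt_deriv_of_contDiffAt hv).hasDerivAt
  have hcoeff : HasDerivAt (fun q => ((d : ℝ) - 1) / q) (-((d : ℝ) - 1) / r ^ 2) r := by
    simpa using (hasDerivAt_const r ((d : ℝ) - 1)).fun_div (hasDerivAt_id r) hr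
  refine (hv₂.add (hcoeff.mul hv₁)).congr_deriv ?_
  ring

lemma pd_sum_pd_radialField (j : Fin d) (hx : x ≠ 0) (hv : ContDiffAt ℝ 2 v ‖x‖) :
    pd j (fun y => ∑ i, pd i (fun z => radialField v z i) y) x
      = radialField (deriv (radialDiv d v)) x j := by
  have hdiv : (fun y => ∑ i, pd i (fun z => radialField v z i) y)
      =ᶠ[𝓝 x] fun y => radialDiv d v ‖y‖ := by
    filter_upwards [eventually_ne_nhds hx, eventually_differentiableAt_norm hv] with y hy hvy
      using sum_pd_radialField hy hvy
  rw [pd_congr j hdiv, radialField_apply, pd_comp_norm j hx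
    (hasDerivAt_radialDiv (norm_ne_zero_iff.2 hx) hv).differentiableAt]

-- A radial field is curl free, so its Laplacian is the gradient of its divergence.
lemma sum_pd_pd_radialField (j : Fin d) (hx : x ≠ 0) (hv : ContDiffAt ℝ 2 v ‖x‖) :
    ∑ i, pd i (fun y => pd i (fun z => radialField v z j) y) x
      = radialField (deriv (radialDiv d v)) x j := by
  have hC2 (i : Fin d) : ContDiffAt ℝ 2 (fun y => radialField v y i) x :=
    contDiffAt_radialField_apply (n := 2) i hx hv
  have hcurl (i : Fin d) :
      pd i (fun z => radialField v z j) =ᶠ[𝓝 x] pd j (fun z => radialField v z i) := by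
    filter_upwards [eventually_ne_nhds hx, eventually_differentiableAt_norm hv] with y hy hvy
      using pd_radialField_comm i j hy hvy
  calc ∑ i, pd i (pd i fun z => radialField v z j) x
      = ∑ i, pd j (pd i fun z => radialField v z i) x :=
        Finset.sum_congr rfl fun i _ => by rw [pd_congr i (hcurl i), pd_pd_comm i j (hC2 i)]
    _ = pd j (fun y => ∑ i, pd i (fun z => radialField v z i) y) x :=
        (pd_sum j fun i _ => differentiableAt_pd i (hC2 i)).symm
    _ = radialField (deriv (radialDiv d v)) x j := pd_sum_pd_radialField j hx hv

lemma sum_pd_pd_comp_norm {φ : ℝ → ℝ} (hx : x ≠ 0) (hφ : ContDiffAt ℝ 2 φ ‖x‖) :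
    ∑ i, pd i (fun y => pd i (fun z => φ ‖z‖) y) x = radialDiv d (deriv φ) ‖x‖ := by
  rw [← sum_pd_radialField hx (differentiableAt_deriv_of_contDiffAt hφ)]
  refine Finset.sum_congr rfl fun i _ => pd_congr i ?_
  filter_upwards [eventually_ne_nhds hx, eventually_differentiableAt_norm hφ] with y hy hφy
    using pd_comp_norm i hy hφy

/-- Radial component of the viscous energy flux `λ (div u) u + 2μ D(u) u` of the radial velocity
field with radial component `v`. -/
noncomputable def viscousFlux (d : ℕ) (μ lam : ℝ) (v : ℝ → ℝ) (r : ℝ) : ℝ :=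
  lam * (radialDiv d v r * v r) + 2 * μ * (deriv v r * v r)

-- Since `∇u` is symmetric, `D(u) u = ∇(|u|² / 2)`, which is radial.
lemma viscousFlux_radialField (μ lam : ℝ) (i : Fin d) (hx : x ≠ 0)
    (hv : DifferentiableAt ℝ v ‖x‖) :
    lam * (∑ k, pd k (fun y => radialField v y k) x) * radialField v x i
        + 2 * μ * ∑ j, (pd i (fun y => radialField v y j) x
            + pd j (fun y => radialField v y i) x) / 2 * radialField v x j
      = radialField (viscousFlux d μ lam v) x i := by
  have hstrain (j : Fin d) :
      (pd i (fun y => radialField v y j) x + pd j (fun y => radialField v y i) x) / 2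
        = pd i (fun y => radialField v y j) x := by
    rw [pd_radialField_comm j i hx hv, add_self_div_two]
  simp only [hstrain]
  rw [sum_pd_radialField hx hv, sum_pd_radialField_mul_radialField i hx hv]
  simp only [radialField_apply, viscousFlux]
  ring

lemma hasDerivAt_viscousFlux (μ lam : ℝ) {r : ℝ} (hr : r ≠ 0) (hv : ContDiffAt ℝ 2 v r) :
    HasDerivAt (viscousFlux d μ lam v)
      (lam * (deriv (radialDiv d v) r * v r + radialDiv d v r * deriv v r)
        + 2 * μ * (deriv (deriv v) r * v r + deriv v r * deriv v r)) r := by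
  have hv₁ := (hv.differentiableAt two_ne_zero).hasDerivAt
  have hv₂ := (differentiableAt_deriv_of_contDiffAt hv).hasDerivAt
  have hdiv := (hasDerivAt_radialDiv (d := d) hr hv).differentiableAt.hasDerivAt
  exact ((hdiv.mul hv₁).const_mul lam).add ((hv₂.mul hv₁).const_mul (2 * μ))

lemma sum_pd_viscousFlux (μ lam : ℝ) (hx : x ≠ 0) (hv : ContDiffAt ℝ 2 v ‖x‖) :
    ∑ i, pd i (fun y =>
        lam * (∑ k, pd k (fun z => radialField v z k) y) * radialField v y i
          + 2 * μ * ∑ j, (pd i (fun z => radialField v z j) y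
              + pd j (fun z => radialField v z i) y) / 2 * radialField v y j) x
      = radialDiv d (viscousFlux d μ lam v) ‖x‖ := by
  have hflux : DifferentiableAt ℝ (viscousFlux d μ lam v) ‖x‖ :=
    (hasDerivAt_viscousFlux μ lam (norm_ne_zero_iff.2 hx) hv).differentiableAt
  rw [← sum_pd_radialField hx hflux]
  refine Finset.sum_congr rfl fun i _ => pd_congr i ?_
  filter_upwards [eventually_ne_nhds hx, eventually_differentiableAt_norm hv] with y hy hvy
    using viscousFlux_radialField μ lam i hy hvy

end RadialFields

/-- The equations (cNS) at time `t` and radius `r` for a spherically symmetric flow with density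
`ϱ(t, r)`, radial velocity `v(t, r)` and temperature `ϑ(t, r)`. -/
def RadialCNSEqns (d : ℕ) (R CV κ μ lam : ℝ) (ϱ v ϑ : ℝ → ℝ → ℝ) (t r : ℝ) : Prop :=
  deriv (fun s => ϱ s r) t + radialDiv d (fun q => ϱ t q * v t q) r = 0
  ∧ deriv (fun s => ϱ s r * v s r) t + radialDiv d (fun q => ϱ t q * v t q * v t q) r
      + deriv (fun q => R * ϱ t q * ϑ t q) r = (2 * μ + lam) * deriv (radialDiv d (v t)) r
  ∧ deriv (fun s => ϱ s r * (v s r ^ 2 / 2 + CV * ϑ s r)) t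
      + radialDiv d (fun q => (ϱ t q * (v t q ^ 2 / 2 + CV * ϑ t q) + R * ϱ t q * ϑ t q) * v t q) r
      - κ * radialDiv d (deriv (ϑ t)) r
      = radialDiv d (viscousFlux d μ lam (v t)) r

lemma RadialCNSEqns.congr {d : ℕ} {R CV κ μ lam : ℝ} {ϱ ϱ' v v' ϑ ϑ' : ℝ → ℝ → ℝ} {t r : ℝ}
    (h : RadialCNSEqns d R CV κ μ lam ϱ v ϑ t r)
    (hϱ : ϱ =ᶠ[𝓝 t] ϱ') (hv : v =ᶠ[𝓝 t] v') (hϑ : ϑ =ᶠ[𝓝 t] ϑ') :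
    RadialCNSEqns d R CV κ μ lam ϱ' v' ϑ' t r := by
  have time_deriv (F : (ℝ → ℝ) → (ℝ → ℝ) → (ℝ → ℝ) → ℝ) :
      deriv (fun s => F (ϱ s) (v s) (ϑ s)) t = deriv (fun s => F (ϱ' s) (v' s) (ϑ' s)) t := by
    refine EventuallyEq.deriv_eq ?_
    filter_upwards [hϱ, hv, hϑ] with s hϱs hvs hϑs
    rw [hϱs, hvs, hϑs]
  unfold RadialCNSEqns at h ⊢
  rwa [time_deriv fun ϱ _ _ => ϱ r, time_deriv fun ϱ v _ => ϱ r * v r,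
    time_deriv fun ϱ v ϑ => ϱ r * (v r ^ 2 / 2 + CV * ϑ r),
    hϱ.eq_of_nhds, hv.eq_of_nhds, hϑ.eq_of_nhds] at h

section Reduction

variable {d : ℕ} {R CV κ μ lam t : ℝ} {ϱ v ϑ : ℝ → ℝ → ℝ} {x : EuclideanSpace ℝ (Fin d)}

theorem RadialCNSEqns.cnsEqns (h : RadialCNSEqns d R CV κ μ lam ϱ v ϑ t ‖x‖) (hx : x ≠ 0)
    (hϱ : DifferentiableAt ℝ (ϱ t) ‖x‖) (hv : ContDiffAt ℝ 2 (v t) ‖x‖)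
    (hϑ : ContDiffAt ℝ 2 (ϑ t) ‖x‖) :
    CNSEqns d R CV κ μ lam (fun s y => ϱ s ‖y‖) (fun s => radialField (v s))
      (fun s y => ϑ s ‖y‖) t x := by
  obtain ⟨hmass, hmomentum, henergy⟩ := h
  have hv₁ := hv.differentiableAt two_ne_zero
  have hϑ₁ := hϑ.differentiableAt two_ne_zero
  refine ⟨?_, fun j => ?_, ?_⟩
  · simp only [mul_radialField_apply (ϱ t)]
    rw [sum_pd_radialField hx (hϱ.fun_mul hv₁), hmass]
  · have htime : deriv (fun s => ϱ s ‖x‖ * radialField (v s) x j) t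
        = deriv (fun s => ϱ s ‖x‖ * v s ‖x‖) t * (x j / ‖x‖) := by
      rw [← deriv_mul_const_field]
      congr 1 with s
      rw [radialField_apply]
      ring
    simp only [mul_radialField_apply (ϱ t)]
    rw [htime, sum_pd_mul_radialField j hx (hϱ.fun_mul hv₁) hv₁,
      pd_comp_norm (φ := fun q => R * ϱ t q * ϑ t q) j hx ((hϱ.const_mul R).mul hϑ₁),
      pd_sum_pd_radialField j hx hv, sum_pd_pd_radialField j hx hv]
    simp only [radialField_apply]
    linear_combination (x j / ‖x‖) * hmomentum
  · have hflux (i : Fin d) : (fun y => radialField (v t) y i * (ϱ t ‖y‖ *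
          (‖radialField (v t) y‖ ^ 2 / 2 + CV * ϑ t ‖y‖) + R * ϱ t ‖y‖ * ϑ t ‖y‖))
        =ᶠ[𝓝 x] fun y => radialField (fun q => (ϱ t q * (v t q ^ 2 / 2 + CV * ϑ t q)
          + R * ϱ t q * ϑ t q) * v t q) y i := by
      filter_upwards [eventually_ne_nhds hx] with y hy
      rw [norm_radialField_sq _ hy, radialField_apply, radialField_apply]
      ring
    have hflux_diff : DifferentiableAt ℝ (fun q => (ϱ t q * (v t q ^ 2 / 2 + CV * ϑ t q)
        + R * ϱ t q * ϑ t q) * v t q) ‖x‖ := by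
      fun_prop
    simp only [norm_radialField_sq _ hx, fun i => pd_congr i (hflux i)]
    rw [sum_pd_radialField hx hflux_diff, sum_pd_pd_comp_norm hx hϑ,
      sum_pd_viscousFlux μ lam hx hv, henergy]

end Reduction

/-- The self-similar profile `(T - s)^(-k/2) f(r / √(T - s))` of weight `k`. -/
noncomputable def selfSimilar (T : ℝ) (k : ℕ) (f : ℝ → ℝ) (s r : ℝ) : ℝ :=
  (√(T - s))⁻¹ ^ k * f (r / √(T - s))

section SelfSimilar

variable {d k : ℕ} {T s t r : ℝ} {f : ℝ → ℝ}

lemma deriv_selfSimilar (T : ℝ) (k : ℕ) (f : ℝ → ℝ) (s : ℝ) :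
    deriv (selfSimilar T k f s) = selfSimilar T (k + 1) (deriv f) s := by
  ext r
  have hscale : deriv (fun q => f (q / √(T - s))) r
      = (√(T - s))⁻¹ * deriv f (r / √(T - s)) := by
    simpa only [div_eq_inv_mul, smul_eq_mul] using deriv_comp_mul_left (√(T - s))⁻¹ f r
  change deriv (fun q => (√(T - s))⁻¹ ^ k * f (q / √(T - s))) r = _
  rw [deriv_const_mul_field, hscale, selfSimilar]
  ring

lemma radialDiv_selfSimilar (k : ℕ) (f : ℝ → ℝ) (hs : s < T) :
    radialDiv d (selfSimilar T k f s) = selfSimilar T (k + 1) (radialDiv d f) s := by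
  ext r
  have hscale : √(T - s) ≠ 0 := (Real.sqrt_pos.2 (sub_pos.2 hs)).ne'
  rw [radialDiv, deriv_selfSimilar]
  simp only [selfSimilar, radialDiv, pow_succ]
  field_simp

lemma viscousFlux_selfSimilar (μ lam : ℝ) (k : ℕ) (f : ℝ → ℝ) (hs : s < T) :
    viscousFlux d μ lam (selfSimilar T k f s)
      = selfSimilar T (2 * k + 1) (viscousFlux d μ lam f) s := by
  ext r
  rw [viscousFlux, radialDiv_selfSimilar k f hs, deriv_selfSimilar]
  simp only [selfSimilar, viscousFlux]
  ring

lemma hasDerivAt_inv_sqrt_sub (ht : t < T) :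
    HasDerivAt (fun s => (√(T - s))⁻¹) ((√(T - t))⁻¹ ^ 3 / 2) t := by
  have hpos : 0 < T - t := sub_pos.2 ht
  have hsqrt : √(T - t) ≠ 0 := (Real.sqrt_pos.2 hpos).ne'
  refine ((((hasDerivAt_id t).const_sub T).sqrt hpos.ne').fun_inv hsqrt).congr_deriv ?_
  simp only [id]
  field_simp

lemma deriv_selfSimilar_time (ht : t < T) (hf : DifferentiableAt ℝ f (r / √(T - t))) :
    deriv (fun s => selfSimilar T k f s r) t
      = selfSimilar T (k + 2) (fun z => (k * f z + z * deriv f z) / 2) t r := by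
  have hscale := hasDerivAt_inv_sqrt_sub ht
  have hprofile : HasDerivAt (fun s => f (r / √(T - s)))
      (deriv f (r / √(T - t)) * (r * ((√(T - t))⁻¹ ^ 3 / 2))) t :=
    hf.hasDerivAt.comp t (hscale.const_mul r)
  refine ((hscale.fun_pow k).mul hprofile).deriv.trans ?_
  rcases k with _ | k
  all_goals
    simp only [selfSimilar, Nat.cast_zero, Nat.cast_succ, Nat.add_sub_cancel]
    ring

end SelfSimilar

section Profiles

variable {d : ℕ} {R CV κ μ lam z : ℝ} {P U Θ : ℝ → ℝ}

lemma BackwardODE.mass (h : BackwardODE d R CV κ μ lam P U Θ) (hz : 0 < z)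
    (hP : DifferentiableAt ℝ P z) (hU : DifferentiableAt ℝ U z) :
    z * deriv P z / 2 + radialDiv d (fun q => P q * U q) z = 0 := by
  rw [radialDiv, deriv_fun_mul hP hU]
  linear_combination (h z hz).1

lemma BackwardODE.momentum (h : BackwardODE d R CV κ μ lam P U Θ) (hz : 0 < z)
    (hU : ContDiffAt ℝ 2 U z) :
    (P z * U z + z * deriv (fun q => P q * U q) z) / 2
        + radialDiv d (fun q => P q * U q * U q) z + deriv (fun q => R * P q * Θ q) z
      = (2 * μ + lam) * deriv (radialDiv d U) z := by
  have hpressure : deriv (fun q => R * P q * Θ q) z = R * deriv (fun q => P q * Θ q) z := by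
    simp only [mul_assoc, deriv_const_mul_field]
  simp only [mul_assoc, ← sq] at hpressure ⊢
  rw [hpressure, (hasDerivAt_radialDiv hz.ne' hU).deriv, radialDiv]
  linear_combination (h z hz).2.1

lemma BackwardODE.energy (h : BackwardODE d R CV κ μ lam P U Θ) (hz : 0 < z)
    (hU : ContDiffAt ℝ 2 U z) :
    P z * (U z ^ 2 / 2 + CV * Θ z)
        + z * deriv (fun q => P q * (U q ^ 2 / 2 + CV * Θ q)) z / 2
        + radialDiv d (fun q => (P q * (U q ^ 2 / 2 + CV * Θ q) + R * P q * Θ q) * U q) z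
        - κ * radialDiv d (deriv Θ) z
      = radialDiv d (viscousFlux d μ lam U) z := by
  have hflux : (fun q => (P q * (U q ^ 2 / 2 + CV * Θ q) + R * P q * Θ q) * U q)
      = fun q => U q * P q * (U q ^ 2 / 2 + CV * Θ q) + R * U q * P q * Θ q := by
    ext q
    ring
  rw [hflux, radialDiv, radialDiv, radialDiv, (hasDerivAt_viscousFlux μ lam hz.ne' hU).deriv,
    (hasDerivAt_radialDiv hz.ne' hU).deriv, viscousFlux, radialDiv]
  linear_combination (h z hz).2.2

lemma pressure_selfSimilar (R T : ℝ) (P Θ : ℝ → ℝ) (s q : ℝ) :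
    R * selfSimilar T 0 P s q * selfSimilar T 2 Θ s q
      = selfSimilar T 2 (fun z => R * P z * Θ z) s q := by
  simp only [selfSimilar]
  ring

lemma momentum_selfSimilar (T : ℝ) (P U : ℝ → ℝ) (s q : ℝ) :
    selfSimilar T 0 P s q * selfSimilar T 1 U s q
      = selfSimilar T 1 (fun z => P z * U z) s q := by
  simp only [selfSimilar]
  ring

lemma energy_selfSimilar (CV T : ℝ) (P U Θ : ℝ → ℝ) (s q : ℝ) :
    selfSimilar T 0 P s q * (selfSimilar T 1 U s q ^ 2 / 2 + CV * selfSimilar T 2 Θ s q)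
      = selfSimilar T 2 (fun z => P z * (U z ^ 2 / 2 + CV * Θ z)) s q := by
  simp only [selfSimilar]
  ring

section SelfSimilarSolution

variable {T t r : ℝ}

lemma BackwardODE.selfSimilar_mass_eqn (h : BackwardODE d R CV κ μ lam P U Θ) (ht : t < T)
    (hr : 0 < r) (hP : DifferentiableAt ℝ P (r / √(T - t)))
    (hU : DifferentiableAt ℝ U (r / √(T - t))) :
    deriv (fun s => selfSimilar T 0 P s r) t
      + radialDiv d (fun q => selfSimilar T 0 P t q * selfSimilar T 1 U t q) r = 0 := by
  have hz : 0 < r / √(T - t) := div_pos hr (Real.sqrt_pos.2 (sub_pos.2 ht))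
  simp only [momentum_selfSimilar, radialDiv_selfSimilar _ _ ht, deriv_selfSimilar_time ht hP]
  simp only [selfSimilar, Nat.cast_zero]
  linear_combination (√(T - t))⁻¹ ^ 2 * h.mass hz hP hU

lemma BackwardODE.selfSimilar_momentum_eqn (h : BackwardODE d R CV κ μ lam P U Θ) (ht : t < T)
    (hr : 0 < r) (hP : DifferentiableAt ℝ P (r / √(T - t)))
    (hU : ContDiffAt ℝ 2 U (r / √(T - t))) :
    deriv (fun s => selfSimilar T 0 P s r * selfSimilar T 1 U s r) t
        + radialDiv d
            (fun q => selfSimilar T 0 P t q * selfSimilar T 1 U t q * selfSimilar T 1 U t q) r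
        + deriv (fun q => R * selfSimilar T 0 P t q * selfSimilar T 2 Θ t q) r
      = (2 * μ + lam) * deriv (radialDiv d (selfSimilar T 1 U t)) r := by
  have hz : 0 < r / √(T - t) := div_pos hr (Real.sqrt_pos.2 (sub_pos.2 ht))
  have hflux (q : ℝ) : selfSimilar T 1 (fun z => P z * U z) t q * selfSimilar T 1 U t q
      = selfSimilar T 2 (fun z => P z * U z * U z) t q := by
    simp only [selfSimilar]
    ring
  simp only [momentum_selfSimilar, hflux, pressure_selfSimilar, radialDiv_selfSimilar _ _ ht,
    deriv_selfSimilar,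
    deriv_selfSimilar_time ht (hP.fun_mul (hU.differentiableAt two_ne_zero))]
  simp only [selfSimilar, Nat.cast_one]
  linear_combination (√(T - t))⁻¹ ^ 3 * h.momentum hz hU

lemma BackwardODE.selfSimilar_energy_eqn (h : BackwardODE d R CV κ μ lam P U Θ) (ht : t < T)
    (hr : 0 < r) (hP : DifferentiableAt ℝ P (r / √(T - t)))
    (hU : ContDiffAt ℝ 2 U (r / √(T - t))) (hΘ : DifferentiableAt ℝ Θ (r / √(T - t))) :
    deriv (fun s => selfSimilar T 0 P s r
          * (selfSimilar T 1 U s r ^ 2 / 2 + CV * selfSimilar T 2 Θ s r)) t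
        + radialDiv d (fun q => (selfSimilar T 0 P t q
              * (selfSimilar T 1 U t q ^ 2 / 2 + CV * selfSimilar T 2 Θ t q)
            + R * selfSimilar T 0 P t q * selfSimilar T 2 Θ t q) * selfSimilar T 1 U t q) r
        - κ * radialDiv d (deriv (selfSimilar T 2 Θ t)) r
      = radialDiv d (viscousFlux d μ lam (selfSimilar T 1 U t)) r := by
  have hz : 0 < r / √(T - t) := div_pos hr (Real.sqrt_pos.2 (sub_pos.2 ht))
  have hflux (q : ℝ) :
      (selfSimilar T 2 (fun z => P z * (U z ^ 2 / 2 + CV * Θ z)) t q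
        + selfSimilar T 2 (fun z => R * P z * Θ z) t q) * selfSimilar T 1 U t q
      = selfSimilar T 3
          (fun z => (P z * (U z ^ 2 / 2 + CV * Θ z) + R * P z * Θ z) * U z) t q := by
    simp only [selfSimilar]
    ring
  have hU₁ := hU.differentiableAt two_ne_zero
  have henergy : DifferentiableAt ℝ (fun z => P z * (U z ^ 2 / 2 + CV * Θ z))
      (r / √(T - t)) := by
    fun_prop
  simp only [energy_selfSimilar, pressure_selfSimilar, hflux, radialDiv_selfSimilar _ _ ht,
    deriv_selfSimilar, viscousFlux_selfSimilar _ _ _ _ ht, deriv_selfSimilar_time ht henergy]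
  simp only [selfSimilar, Nat.cast_ofNat]
  linear_combination (√(T - t))⁻¹ ^ 4 * h.energy hz hU

theorem BackwardODE.radialCNSEqns_selfSimilar (h : BackwardODE d R CV κ μ lam P U Θ)
    (ht : t < T) (hr : 0 < r) (hP : DifferentiableAt ℝ P (r / √(T - t)))
    (hU : ContDiffAt ℝ 2 U (r / √(T - t))) (hΘ : DifferentiableAt ℝ Θ (r / √(T - t))) :
    RadialCNSEqns d R CV κ μ lam (selfSimilar T 0 P) (selfSimilar T 1 U) (selfSimilar T 2 Θ)
      t r :=
  ⟨h.selfSimilar_mass_eqn ht hr hP (hU.differentiableAt two_ne_zero),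
    h.selfSimilar_momentum_eqn ht hr hP hU, h.selfSimilar_energy_eqn ht hr hP hU hΘ⟩

end SelfSimilarSolution

end Profiles

lemma contDiffAt_const_mul_comp_div {n : ℕ∞} {f : ℝ → ℝ} {a r : ℝ} (c : ℝ)
    (hf : ContDiffAt ℝ n f (r / a)) : ContDiffAt ℝ n (fun q => c * f (q / a)) r :=
  contDiffAt_const.mul (hf.comp r (contDiffAt_id.div_const a))

theorem selfsimilar_profiles_solve_cns_general
    {d : ℕ} {T R CV κ μ lam : ℝ} {P U Θ : ℝ → ℝ}
    (hP : DifferentiableOn ℝ P (Ioi 0))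
    (hU : ContDiffOn ℝ 2 U (Ioi 0))
    (hΘ : ContDiffOn ℝ 2 Θ (Ioi 0))
    (hODE : BackwardODE d R CV κ μ lam P U Θ)
    {t : ℝ} (ht : t < T) {x : EuclideanSpace ℝ (Fin d)} (hx : x ≠ 0) :
    CNSEqns d R CV κ μ lam
      (fun s y => P (‖y‖ / √(T - s)))
      (fun s y => ((√(T - s))⁻¹ * U (‖y‖ / √(T - s)) / ‖y‖) • y)
      (fun s y => (T - s)⁻¹ * Θ (‖y‖ / √(T - s))) t x := by
  have hr : 0 < ‖x‖ := norm_pos_iff.2 hx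
  have hz : Ioi 0 ∈ 𝓝 (‖x‖ / √(T - t)) :=
    Ioi_mem_nhds (div_pos hr (Real.sqrt_pos.2 (sub_pos.2 ht)))
  have hPz := hP.differentiableAt hz
  have hUz := hU.contDiffAt hz
  have hΘz := hΘ.contDiffAt hz
  have hradial : RadialCNSEqns d R CV κ μ lam (fun s r => P (r / √(T - s)))
      (fun s r => (√(T - s))⁻¹ * U (r / √(T - s))) (fun s r => (T - s)⁻¹ * Θ (r / √(T - s)))
      t ‖x‖ := by
    refine (hODE.radialCNSEqns_selfSimilar ht hr hPz hUz
      (hΘz.differentiableAt two_ne_zero)).congr (.of_eq ?_) (.of_eq ?_) ?_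
    · ext s r
      simp [selfSimilar]
    · ext s r
      simp [selfSimilar]
    · filter_upwards [eventually_lt_nhds ht] with s hs
      ext r
      rw [selfSimilar, inv_pow, Real.sq_sqrt (sub_nonneg.2 hs.le)]
  exact hradial.cnsEqns hx (hPz.comp ‖x‖ (differentiableAt_id.div_const _))
    (contDiffAt_const_mul_comp_div (n := 2) _ hUz) (contDiffAt_const_mul_comp_div (n := 2) _ hΘz)

/-- (Self-similar profiles give solutions of cNS) -/
theorem selfsimilar_profiles_solve_cns
    (d : ℕ) (hd : 1 ≤ d) (T : ℝ) (hT : 0 < T) (R CV κ μ lam : ℝ)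
    (hR : 0 < R) (hCV : 0 < CV) (hκ : 0 < κ) (hμ : 0 < μ)
    (hlam : 0 ≤ 2 * μ + d * lam)
    (P U Θ : ℝ → ℝ)
    (hP : ContDiffOn ℝ 1 P (Ioi 0))
    (hU : ContDiffOn ℝ 2 U (Ioi 0))
    (hΘ : ContDiffOn ℝ 2 Θ (Ioi 0))
    (hODE : BackwardODE d R CV κ μ lam P U Θ) :
    ∀ t : ℝ, 0 < t → t < T → ∀ x : EuclideanSpace ℝ (Fin d), x ≠ 0 →
      CNSEqns d R CV κ μ lam
        (fun s y => P (‖y‖ / Real.sqrt (T - s)))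
        (fun s y => ((Real.sqrt (T - s))⁻¹ * U (‖y‖ / Real.sqrt (T - s)) / ‖y‖) • y)
        (fun s y => (T - s)⁻¹ * Θ (‖y‖ / Real.sqrt (T - s))) t x :=
  fun _ _ ht _ hx => selfsimilar_profiles_solve_cns_general
    (hP.differentiableOn one_ne_zero) hU hΘ hODE ht hx
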